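/- Let p₁ ≥ p₂ ≥ ⋯ ≥ pₙ ≥ 0 be real numbers, 0 ≤ x ≤ 1/2, k ≥ 1 a real number, and l = ((1+k)^x - (1/2)^x)/k^x. Then (p₁ + p₂ + ⋯ + pₙ)^x ≥ (1/2)^x · (l^(n-1) p₁^x + l^(n-2) p₂^x + ⋯ + l^0 pₙ^x). -/

import Mathlib

/-!
Adding one term `q` to a partial sum `S` with `k * q ≤ S` costs only the factor `l`:
`(S + q) ^ x ≥ l * S ^ x + (q / 2) ^ x`. After division by `S ^ x` this compares the values of
`u ↦ (1 + u) ^ x - (u / 2) ^ x` at `q / S ≤ 1 / k` and at `1 / k`, where the value is `l`, and that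
function is decreasing on `[0, 1]` because `x ≤ 1 / 2`. Iterating over the terms produces the powers
of `l`.
-/

open Finset

/-- The gain `(1 + u) ^ x - (u / 2) ^ x`. The constant `l` of the theorem is its value at
`u = 1 / k`; in the variable `u = 1 / t` the case of a vanishing new term is simply `u = 0`. -/
noncomputable def rpowGain (x u : ℝ) : ℝ := (1 + u) ^ x - (u / 2) ^ x

section RpowGain

variable {x u k S q : ℝ}

lemma rpowGain_nonneg (hx : 0 ≤ x) (hu : 0 ≤ u) : 0 ≤ rpowGain x u :=
  sub_nonneg.2 <| Real.rpow_le_rpow (by positivity) (by linarith) hx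

lemma rpowGain_div_mul_rpow (x : ℝ) (hS : 0 ≤ S) (hq : 0 ≤ q) (h : S = 0 → q = 0) :
    rpowGain x (q / S) * S ^ x = (S + q) ^ x - (q / 2) ^ x := by
  have hqS : q / S * S = q := div_mul_cancel_of_imp h
  rw [rpowGain, sub_mul, ← Real.mul_rpow (by positivity) hS, ← Real.mul_rpow (by positivity) hS,
    add_mul, one_mul, hqS, div_mul_eq_mul_div, hqS]

lemma rpowGain_one_div (x : ℝ) (hk : 0 < k) :
    rpowGain x (1 / k) = ((1 + k) ^ x - (1 / 2) ^ x) / k ^ x := by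
  rw [eq_div_iff (by positivity),
    rpowGain_div_mul_rpow x hk.le zero_le_one fun h => absurd h hk.ne', add_comm]

lemma hasDerivAt_rpowGain (x : ℝ) (hu : 0 < u) :
    HasDerivAt (rpowGain x) (x * ((1 + u) ^ (x - 1) - 1 / 2 * (u / 2) ^ (x - 1))) u := by
  have h_add : HasDerivAt (fun v : ℝ => 1 + v) 1 u := (hasDerivAt_id u).const_add 1
  have h_half : HasDerivAt (fun v : ℝ => v / 2) (1 / 2) u := (hasDerivAt_id u).div_const 2
  refine ((h_add.rpow_const (p := x) (.inl (by positivity))).sub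
    (h_half.rpow_const (p := x) (.inl (by positivity)))).congr_deriv ?_
  ring

lemma four_rpow_sub_one_le_half (hx : x ≤ 1 / 2) : (4 : ℝ) ^ (x - 1) ≤ 1 / 2 :=
  calc (4 : ℝ) ^ (x - 1) ≤ 4 ^ (-(1 / 2) : ℝ) :=
        Real.rpow_le_rpow_of_exponent_le (by norm_num) (by linarith)
    _ = 1 / 2 := by
        rw [show (4 : ℝ) = 2 ^ (2 : ℝ) by norm_num, ← Real.rpow_mul zero_le_two]
        norm_num [Real.rpow_neg_one]

lemma one_add_rpow_sub_one_le (hx : x ≤ 1 / 2) (hu0 : 0 < u) (hu1 : u ≤ 1) :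
    (1 + u) ^ (x - 1) ≤ 1 / 2 * (u / 2) ^ (x - 1) :=
  calc (1 + u) ^ (x - 1) ≤ (4 * (u / 2)) ^ (x - 1) :=
        Real.rpow_le_rpow_of_nonpos (by positivity) (by linarith) (by linarith)
    _ = 4 ^ (x - 1) * (u / 2) ^ (x - 1) := Real.mul_rpow (by norm_num) (by positivity)
    _ ≤ 1 / 2 * (u / 2) ^ (x - 1) := by gcongr; exact four_rpow_sub_one_le_half hx

lemma antitoneOn_rpowGain (hx0 : 0 ≤ x) (hx : x ≤ 1 / 2) :
    AntitoneOn (rpowGain x) (Set.Icc 0 1) := by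
  have h_cont : Continuous (rpowGain x) :=
    ((continuous_const.add continuous_id).rpow_const fun _ => .inr hx0).sub
      ((continuous_id.div_const 2).rpow_const fun _ => .inr hx0)
  refine antitoneOn_of_hasDerivWithinAt_nonpos (convex_Icc 0 1) h_cont.continuousOn
    (f' := fun u => x * ((1 + u) ^ (x - 1) - 1 / 2 * (u / 2) ^ (x - 1))) ?_ ?_ <;>
    rw [interior_Icc] <;> rintro u ⟨hu0, hu1⟩
  · exact (hasDerivAt_rpowGain x hu0).hasDerivWithinAt
  · exact mul_nonpos_of_nonneg_of_nonpos hx0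
      (sub_nonpos.2 (one_add_rpow_sub_one_le hx hu0 hu1.le))

lemma rpowGain_mul_rpow_add_le (hx0 : 0 ≤ x) (hx : x ≤ 1 / 2) (hk : 1 ≤ k) (hS : 0 ≤ S)
    (hq : 0 ≤ q) (hqS : k * q ≤ S) :
    rpowGain x (1 / k) * S ^ x + (1 / 2) ^ x * q ^ x ≤ (S + q) ^ x := by
  have hk0 : 0 < k := by linarith
  have h_inv : 1 / k ≤ 1 := (div_le_one hk0).2 hk
  have h_ratio : q / S ≤ 1 / k :=
    div_le_of_le_mul₀ hS (by positivity) (by rwa [one_div_mul_eq_div, le_div_iff₀' hk0])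
  have h_gain : rpowGain x (1 / k) ≤ rpowGain x (q / S) :=
    antitoneOn_rpowGain hx0 hx ⟨by positivity, h_ratio.trans h_inv⟩ ⟨by positivity, h_inv⟩ h_ratio
  have h_zero : S = 0 → q = 0 := by
    rintro rfl
    exact le_antisymm (nonpos_of_mul_nonpos_right hqS hk0) hq
  calc rpowGain x (1 / k) * S ^ x + (1 / 2) ^ x * q ^ x
      ≤ rpowGain x (q / S) * S ^ x + (1 / 2) ^ x * q ^ x := by gcongr
    _ = (S + q) ^ x - (q / 2) ^ x + (q / 2) ^ x := by
        rw [rpowGain_div_mul_rpow x hS hq h_zero, ← Real.mul_rpow (by norm_num) hq,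
          one_div_mul_eq_div]
    _ = (S + q) ^ x := sub_add_cancel _ _

end RpowGain

lemma mul_le_of_eq_zero_or_le_div {K : Type*} [Field K] [LinearOrder K] [IsStrictOrderedRing K]
    {k S q : K} (hS : 0 ≤ S) (hq : 0 ≤ q) (h : q = 0 ∨ k ≤ S / q) : k * q ≤ S := by
  obtain rfl | h_div := h
  · rwa [mul_zero]
  · exact mul_le_of_le_div₀ hS hq h_div

lemma sum_pow_mul_le_of_mul_add_le {R : Type*} [CommSemiring R] [PartialOrder R]
    [IsOrderedRing R] {l : R} {a b : ℕ → R} {n : ℕ} (hl : 0 ≤ l) (h_zero : b 0 ≤ a 0)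
    (h_succ : ∀ m < n, l * a m + b (m + 1) ≤ a (m + 1)) :
    ∑ i ∈ range (n + 1), l ^ (n - i) * b i ≤ a n := by
  induction n with
  | zero => simpa using h_zero
  | succ n ih =>
    have h_sum : ∑ i ∈ range (n + 1), l ^ (n + 1 - i) * b i =
        l * ∑ i ∈ range (n + 1), l ^ (n - i) * b i := by
      rw [mul_sum]
      refine sum_congr rfl fun i hi => ?_
      rw [Nat.sub_add_comm (mem_range_succ_iff.1 hi), pow_succ', mul_assoc]
    calc ∑ i ∈ range (n + 1 + 1), l ^ (n + 1 - i) * b i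
        = l * ∑ i ∈ range (n + 1), l ^ (n - i) * b i + b (n + 1) := by
          rw [sum_range_succ, h_sum, Nat.sub_self, pow_zero, one_mul]
      _ ≤ l * a n + b (n + 1) := by
          gcongr
          exact ih fun m hm => h_succ m (hm.trans n.lt_succ_self)
      _ ≤ a (n + 1) := h_succ n n.lt_succ_self

theorem lemma2_part1_general {n : ℕ} {p : ℕ → ℝ} {x k : ℝ} (hpos : ∀ i, i < n → 0 ≤ p i)
    (hx0 : 0 ≤ x) (hx : x ≤ 1 / 2) (hk : 1 ≤ k)
    (hratio : ∀ j, j + 1 < n →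
      p (j + 1) = 0 ∨ k ≤ (∑ i ∈ range (j + 1), p i) / p (j + 1)) :
    (1 / 2 : ℝ) ^ x * ∑ i ∈ range n,
        (((1 + k) ^ x - (1 / 2 : ℝ) ^ x) / k ^ x) ^ (n - 1 - i) * p i ^ x ≤
      (∑ i ∈ range n, p i) ^ x := by
  have hk0 : 0 < k := by linarith
  obtain _ | n := n
  · simpa using Real.rpow_nonneg le_rfl x
  have h_sum_nonneg : ∀ m ≤ n + 1, 0 ≤ ∑ i ∈ range m, p i := fun m hm =>
    sum_nonneg fun i hi => hpos i ((mem_range.1 hi).trans_le hm)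
  have h_first : (1 / 2 : ℝ) ^ x * p 0 ^ x ≤ (∑ i ∈ range (0 + 1), p i) ^ x := by
    rw [zero_add, sum_range_one]
    exact mul_le_of_le_one_left (Real.rpow_nonneg (hpos 0 n.succ_pos) x)
      (Real.rpow_le_one (by norm_num) (by norm_num) hx0)
  have h_step : ∀ m < n, rpowGain x (1 / k) * (∑ i ∈ range (m + 1), p i) ^ x +
      (1 / 2 : ℝ) ^ x * p (m + 1) ^ x ≤ (∑ i ∈ range (m + 1 + 1), p i) ^ x := by
    intro m hm
    have hS := h_sum_nonneg (m + 1) (by lia)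
    have hp := hpos (m + 1) (by lia)
    rw [sum_range_succ _ (m + 1)]
    exact rpowGain_mul_rpow_add_le hx0 hx hk hS hp
      (mul_le_of_eq_zero_or_le_div hS hp (hratio m (by lia)))
  rw [← rpowGain_one_div x hk0, mul_sum]
  simpa only [add_tsub_cancel_right, mul_left_comm] using
    sum_pow_mul_le_of_mul_add_le (a := fun m => (∑ i ∈ range (m + 1), p i) ^ x)
      (b := fun i => (1 / 2 : ℝ) ^ x * p i ^ x)
      (rpowGain_nonneg hx0 (one_div_nonneg.2 hk0.le)) h_first h_step

theorem lemma2_part1 (n : ℕ) (hn : 1 ≤ n) (p : ℕ → ℝ) (x k : ℝ)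
    (hord : ∀ i j, i ≤ j → j < n → p j ≤ p i)
    (hpos : ∀ i, i < n → 0 ≤ p i)
    (hx0 : 0 ≤ x) (hx : x ≤ 1 / 2) (hk : 1 ≤ k)
    (hratio : ∀ j, j + 1 < n →
      p (j + 1) = 0 ∨ (∑ i ∈ Finset.range (j + 1), p i) / p (j + 1) ≥ k) :
    (∑ i ∈ Finset.range n, p i) ^ x ≥
      (1 / 2 : ℝ) ^ x * ∑ i ∈ Finset.range n,
        (((1 + k) ^ x - (1 / 2 : ℝ) ^ x) / k ^ x) ^ (n - 1 - i) * p i ^ x :=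
  lemma2_part1_general hpos hx0 hx hk hratio
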